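/- Finite Hilbert (Tricomi) transform of P_ν(ξ)P_ν(−ξ): for every ν ∈ ℂ∖ℤ and every x with −1 < x < 1, the Cauchy principal value P∫_{−1}^1 2 P_ν(ξ) P_ν(−ξ) / (π (x−ξ)) dξ equals ([P_ν(x)]² − [P_ν(−x)]²) / sin(νπ). -/

import Mathlib

open Real MeasureTheory intervalIntegral Filter Topology

/-- Legendre function of the first kind of complex degree `ν`, defined on `(-1, 1]`
via the Mehler–Dirichlet integral. -/
noncomputable def legendreP (ν : ℂ) (x : ℝ) : ℂ :=
  if x = 1 then 1
  else ((2 / π : ℝ) : ℂ) *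
    ∫ β in (0:ℝ)..(Real.arccos x),
      Complex.cos ((2*ν + 1) * (β:ℂ) / 2) / ((Real.sqrt (2 * (Real.cos β - x)) : ℝ) : ℂ)

noncomputable def kk (u : ℝ) : ℝ := (√u)⁻¹

lemma kk_nonneg (u : ℝ) : 0 ≤ kk u := by unfold kk; positivity
lemma kk_of_nonpos {u : ℝ} (h : u ≤ 0) : kk u = 0 := by simp [kk, Real.sqrt_eq_zero_of_nonpos h]
lemma kk_mul {u : ℝ} (h : 0 ≤ u) (v : ℝ) : kk u * kk v = kk (u * v) := by
  simp [kk, Real.sqrt_mul h, mul_comm]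
lemma kk_measurable : Measurable kk := by unfold kk; fun_prop
lemma kk_sq_mul {c : ℝ} (h : 0 ≤ c) (v : ℝ) : kk (c ^ 2 * v) = c⁻¹ * kk v := by
  rw [← kk_mul (by positivity)]; simp [kk, Real.sqrt_sq h]

noncomputable def EE (q p : ℝ) : ℝ := ∫ X in Set.Ioo q 1, kk ((1 - X^2) * ((X - p) * (X - q)))

lemma EE_symm {p q : ℝ} (hp : -1 < p) (hpq : p < q) (hq : q < 1) : EE q p = EE (-p) (-q) := by
  set r : ℝ := (q - p) / 2 with hr
  have hr0 : 0 < r := by rw [hr]; linarith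
  have hr1 : r < 1 := by rw [hr]; linarith
  let den : ℝ → ℝ := fun X => (X - q) + r * (1 - X)
  let Y : ℝ → ℝ := fun X => (r * (1 - X) - p * (X - q)) / den X
  let Y' : ℝ → ℝ := fun X => - (r * (1 - q) * (1 + p)) / (den X) ^ 2
  have hden : ∀ X ∈ Set.Ioo q 1, 0 < den X := by
    intro X hX
    have := mul_pos hr0 (sub_pos.2 hX.2)
    have := hX.1
    simp only [den]; linarith
  have hY1 : ∀ X ∈ Set.Ioo q 1, 1 - Y X = (X - q) * (1 + p) / den X := by
    intro X hX
    have h0 := (hden X hX).ne'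
    simp only [Y]
    rw [eq_div_iff h0, sub_mul, div_mul_cancel₀ _ h0]; simp only [den]; ring
  have hY2 : ∀ X ∈ Set.Ioo q 1, Y X + p = r * (1 - X) * (1 + p) / den X := by
    intro X hX
    have h0 := (hden X hX).ne'
    simp only [Y]
    rw [eq_div_iff h0, add_mul, div_mul_cancel₀ _ h0]; simp only [den]; ring
  have hY3 : ∀ X ∈ Set.Ioo q 1, 1 + Y X = (1 - q) * (X - p) / den X := by
    intro X hX
    have h0 := (hden X hX).ne'
    simp only [Y]
    rw [eq_div_iff h0, add_mul, div_mul_cancel₀ _ h0]; simp only [den, hr]; ring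
  have hY4 : ∀ X ∈ Set.Ioo q 1, Y X + q = r * (1 - q) * (1 + X) / den X := by
    intro X hX
    have h0 := (hden X hX).ne'
    simp only [Y]
    rw [eq_div_iff h0, add_mul, div_mul_cancel₀ _ h0]; simp only [den, hr]; ring
  have himg : Y '' Set.Ioo q 1 = Set.Ioo (-p) 1 := by
    ext y
    constructor
    · rintro ⟨X, hX, rfl⟩
      have h1 := hY1 X hX
      have h2 := hY2 X hX
      have h0 := hden X hX
      have e1 : 0 < (X - q) * (1 + p) / den X :=
        div_pos (mul_pos (by linarith [hX.1]) (by linarith)) h0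
      have e2 : 0 < r * (1 - X) * (1 + p) / den X :=
        div_pos (mul_pos (mul_pos hr0 (by linarith [hX.2])) (by linarith)) h0
      constructor <;> linarith
    · intro hy
      have hy1 : 0 < 1 - y := by linarith [hy.2]
      have hy2 : 0 < y + p := by linarith [hy.1]
      have hd : 0 < (y + p) + r * (1 - y) := by positivity
      refine ⟨(q * (y + p) + r * (1 - y)) / ((y + p) + r * (1 - y)), ⟨?_, ?_⟩, ?_⟩
      · rw [lt_div_iff₀ hd]; nlinarith [mul_pos hr0 hy1]
      · rw [div_lt_one hd]; nlinarith
      · simp only [Y, den]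
        have e1 : (q * (y + p) + r * (1 - y)) / ((y + p) + r * (1 - y)) - q
          = r * (1 - y) * (1 - q) / ((y + p) + r * (1 - y)) := by field_simp; ring
        have e2 : 1 - (q * (y + p) + r * (1 - y)) / ((y + p) + r * (1 - y))
          = (y + p) * (1 - q) / ((y + p) + r * (1 - y)) := by field_simp; ring
        rw [e1, e2]
        have h1q : 0 < 1 - q := by linarith
        have h1p : 0 < 1 + p := by linarith
        have e3 : r * (1 - y) * (1 - q) / (y + p + r * (1 - y)) + r * ((y + p) * (1 - q) / (y + p + r * (1 - y)))
          = r * (1 - q) * (1 + p) / (y + p + r * (1 - y)) := by field_simp; ring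
        rw [e3]
        field_simp
        ring
  have hinj : Set.InjOn Y (Set.Ioo q 1) := by
    intro X hX Z hZ h
    have h1 := hY1 X hX
    have h2 := hY1 Z hZ
    rw [h, h2] at h1
    have hx := hden X hX
    have hz := hden Z hZ
    rw [div_eq_div_iff hz.ne' hx.ne'] at h1
    simp only [den] at h1
    have : (r * (1 - q) * (1 + p)) * (X - Z) = 0 := by linear_combination -h1
    have h3 : r * (1 - q) * (1 + p) ≠ 0 :=
      (mul_pos (mul_pos hr0 (by linarith)) (by linarith)).ne'
    have := (mul_eq_zero.1 this).resolve_left h3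
    linarith
  have hder : ∀ X ∈ Set.Ioo q 1, HasDerivWithinAt Y (Y' X) (Set.Ioo q 1) X := by
    intro X hX
    have h0 := (hden X hX).ne'
    have d1 : HasDerivAt (fun X => r * (1 - X) - p * (X - q)) (r * (-1) - p * 1) X :=
      (((hasDerivAt_id X).const_sub 1).const_mul r).sub (((hasDerivAt_id X).sub_const q).const_mul p)
    have d2 : HasDerivAt den (1 + r * (-1)) X :=
      ((hasDerivAt_id X).sub_const q).add (((hasDerivAt_id X).const_sub 1).const_mul r)
    have := (d1.div d2 h0).hasDerivWithinAt (s := Set.Ioo q 1)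
    refine this.congr_deriv ?_
    simp only [Y', den]
    congr 1
    rw [hr]; ring
  have key := integral_image_eq_integral_abs_deriv_smul measurableSet_Ioo hder hinj
    (fun X => kk ((1 - X^2) * ((X + q) * (X + p))))
  rw [himg] at key
  unfold EE
  simp only [sub_neg_eq_add]
  rw [key]
  apply setIntegral_congr_fun measurableSet_Ioo
  intro X hX
  have h0 := hden X hX
  simp only [smul_eq_mul]
  have e : (1 - (Y X)^2) * ((Y X + q) * (Y X + p)) = (|Y' X|) ^ 2 * ((1 - X^2) * ((X - p) * (X - q))) := by
    have : 1 - (Y X)^2 = (1 - Y X) * (1 + Y X) := by ring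
    rw [this, sq_abs, hY1 X hX, hY2 X hX, hY3 X hX, hY4 X hX]
    simp only [Y']
    field_simp
    ring
  rw [e, kk_sq_mul (abs_nonneg _), mul_inv_cancel_left₀]
  simp only [Y']
  rw [abs_ne_zero]
  exact div_ne_zero (neg_ne_zero.2 (mul_pos (mul_pos hr0 (by linarith)) (by linarith)).ne') (by positivity)

lemma inner_J {θ δ : ℝ} (hδ : 0 < δ) (hδθ : δ < θ) (hθ : θ < π) :
    ∫ τ in Set.Ioo 0 (θ - δ), kk (Real.cos (τ - δ) - Real.cos θ) * kk (Real.cos (τ + δ) - Real.cos θ)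
      = EE (Real.cos (θ - δ)) (Real.cos (θ + δ)) := by
  have himg : Real.cos '' Set.Ioo 0 (θ - δ) = Set.Ioo (Real.cos (θ - δ)) 1 := by
    ext y
    constructor
    · rintro ⟨t, ht, rfl⟩
      constructor
      · exact Real.cos_lt_cos_of_nonneg_of_le_pi ht.1.le (by linarith) ht.2
      · rw [← Real.cos_zero]
        exact Real.cos_lt_cos_of_nonneg_of_le_pi le_rfl (by linarith [ht.2]) ht.1
    · intro hy
      have h1 : -1 ≤ y := (Real.neg_one_le_cos _).trans hy.1.le
      refine ⟨Real.arccos y, ⟨Real.arccos_pos.2 hy.2, ?_⟩, Real.cos_arccos h1 hy.2.le⟩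
      have : Real.arccos (Real.cos (θ - δ)) = θ - δ := Real.arccos_cos (by linarith) (by linarith)
      rw [← this]
      exact Real.arccos_lt_arccos (Real.neg_one_le_cos _) hy.1 hy.2.le
  have key := integral_image_eq_integral_abs_deriv_smul (measurableSet_Ioo (a := (0:ℝ)) (b := θ - δ))
    (fun t _ => (Real.hasDerivAt_cos t).hasDerivWithinAt) 
    (Real.injOn_cos.mono (fun t (ht : t ∈ Set.Ioo 0 (θ - δ)) => Set.mem_Icc.2 ⟨ht.1.le, by linarith [ht.2]⟩))
    (fun X => kk ((1 - X^2) * ((X - Real.cos (θ + δ)) * (X - Real.cos (θ - δ)))))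
  unfold EE
  rw [← himg, key]
  apply setIntegral_congr_fun measurableSet_Ioo
  intro t ht
  simp only [smul_eq_mul]
  have hs : 0 < Real.sin t := Real.sin_pos_of_pos_of_lt_pi ht.1 (by linarith [ht.2])
  have h1 : 0 ≤ Real.cos (t - δ) - Real.cos θ := by
    rw [← Real.cos_abs (t - δ)]
    have : |t - δ| ≤ θ := by rw [abs_le]; constructor <;> linarith [ht.1, ht.2]
    linarith [Real.cos_le_cos_of_nonneg_of_le_pi (abs_nonneg (t - δ)) hθ.le this]
  rw [kk_mul h1, ← Real.sin_sq, kk_sq_mul hs.le, abs_neg, abs_of_pos hs, ← mul_assoc,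
    mul_inv_cancel₀ hs.ne', one_mul]
  congr 1
  rw [Real.cos_add, Real.cos_add, Real.cos_sub, Real.cos_sub]
  have e1 := Real.sin_sq_add_cos_sq t
  have e2 := Real.sin_sq_add_cos_sq θ
  have e3 := Real.sin_sq_add_cos_sq δ
  linear_combination (-(Real.sin δ)^2) * e1 + (Real.sin δ)^2 * e2 + ((Real.cos t)^2 - (Real.cos θ)^2) * e3

noncomputable def hh (a b x ξ : ℝ) : ℝ := kk (b - ξ) * kk (ξ - a) / (x - ξ)

lemma hh_measurable (a b x : ℝ) : Measurable (hh a b x) := by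
  unfold hh
  exact ((kk_measurable.comp (by fun_prop)).mul (kk_measurable.comp (by fun_prop))).div (by fun_prop)

lemma hh_zero {a b x ξ : ℝ} (h : ξ ∉ Set.Ioo a b) : hh a b x ξ = 0 := by
  unfold hh
  by_cases h1 : a < ξ
  · have : b ≤ ξ := by by_contra h2; exact h ⟨h1, not_le.1 h2⟩
    rw [kk_of_nonpos (u := b - ξ) (by linarith)]; simp
  · rw [kk_of_nonpos (u := ξ - a) (by linarith)]; simp

lemma hh_nonneg {a b x : ℝ} (hbx : b < x) (ξ : ℝ) : 0 ≤ hh a b x ξ := by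
  by_cases h : ξ ∈ Set.Ioo a b
  · exact div_nonneg (mul_nonneg (kk_nonneg _) (kk_nonneg _)) (by linarith [h.2])
  · rw [hh_zero h]

lemma hh_out {a b x : ℝ} (hab : a < b) (hbx : b < x) :
    Integrable (hh a b x) ∧ ∫ ξ, hh a b x ξ = π * (kk (x - a) * kk (x - b)) := by
  let u : ℝ → ℝ := fun ξ => ((ξ - a) * (x - b) - (b - ξ) * (x - a)) / ((b - a) * (x - ξ))
  let F : ℝ → ℝ := fun ξ => kk (x - a) * kk (x - b) * Real.arcsin (u ξ)
  have hxa : 0 < x - a := by linarith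
  have hxb : 0 < x - b := by linarith
  have hba : 0 < b - a := by linarith
  have hcont : ContinuousOn F (Set.Icc a b) := by
    apply ContinuousOn.mul continuousOn_const
    apply Real.continuous_arcsin.comp_continuousOn
    apply ContinuousOn.div (by fun_prop) (by fun_prop)
    intro ξ hξ
    have : 0 < x - ξ := by linarith [hξ.2]
    positivity
  have hder : ∀ ξ ∈ Set.Ioo a b, HasDerivAt F (hh a b x ξ) ξ := by
    intro ξ hξ
    have h1 : 0 < ξ - a := by linarith [hξ.1]
    have h2 : 0 < b - ξ := by linarith [hξ.2]
    have h3 : 0 < x - ξ := by linarith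
    have h4 : 0 < (b - a) * (x - ξ) := by positivity
    have d1 : HasDerivAt u ((2 * (x - a) * (x - b) * (b - a)) / ((b - a) * (x - ξ)) ^ 2) ξ := by
      have n1 : HasDerivAt (fun ξ => (ξ - a) * (x - b) - (b - ξ) * (x - a)) (1 * (x - b) - (-1) * (x - a)) ξ :=
        (((hasDerivAt_id ξ).sub_const a).mul_const (x - b)).sub
          (((hasDerivAt_id ξ).const_sub b).mul_const (x - a))
      have n2 : HasDerivAt (fun ξ => (b - a) * (x - ξ)) ((b - a) * (-1)) ξ :=
        (((hasDerivAt_id ξ).const_sub x).const_mul (b - a))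
      refine (n1.div n2 h4.ne').congr_deriv ?_
      congr 1
      ring
    have e : 1 - (u ξ) ^ 2 = (2 / ((b - a) * (x - ξ))) ^ 2 * (((x - a) * (x - b)) * ((b - ξ) * (ξ - a))) := by
      simp only [u]
      field_simp
      ring
    have hpos : 0 < 1 - (u ξ) ^ 2 := by rw [e]; positivity
    have hu1 : u ξ ≠ -1 := by intro h; rw [h] at hpos; norm_num at hpos
    have hu2 : u ξ ≠ 1 := by intro h; rw [h] at hpos; norm_num at hpos
    have d2 := ((Real.hasDerivAt_arcsin hu1 hu2).comp ξ d1).const_mul (kk (x - a) * kk (x - b))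
    refine d2.congr_deriv ?_
    rw [e, Real.sqrt_mul (by positivity), Real.sqrt_sq (by positivity), hh, kk_mul hxa.le, kk_mul h2.le,
      Real.sqrt_mul (by positivity)]
    have s1 : 0 < √((x - a) * (x - b)) := Real.sqrt_pos.2 (by positivity)
    have s2 : 0 < √((b - ξ) * (ξ - a)) := Real.sqrt_pos.2 (by positivity)
    have s3 : √((x - a) * (x - b)) ^ 2 = (x - a) * (x - b) := Real.sq_sqrt (by positivity)
    unfold kk
    field_simp
    rw [s3]
  have hint := integrableOn_deriv_of_nonneg hcont hder (fun ξ _ => hh_nonneg hbx ξ)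
  have hsupp : Function.support (hh a b x) ⊆ Set.Ioc a b := by
    intro ξ hξ
    by_contra h
    exact hξ (hh_zero (fun h' => h ⟨h'.1, h'.2.le⟩))
  refine ⟨(integrableOn_iff_integrable_of_support_subset hsupp).1 hint, ?_⟩
  rw [← setIntegral_eq_integral_of_forall_compl_eq_zero (s := Set.Ioc a b)
    (fun ξ hξ => hh_zero (fun h' => hξ ⟨h'.1, h'.2.le⟩)), ← intervalIntegral.integral_of_le hab.le,
    integral_eq_sub_of_hasDerivAt_of_le hab.le hcont hder
    ((intervalIntegrable_iff_integrableOn_Ioc_of_le hab.le).2 hint)]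
  have ub : u b = 1 := by
    simp only [u]; rw [div_eq_one_iff_eq (by positivity)]; ring
  have ua : u a = -1 := by
    simp only [u]; rw [div_eq_iff (by positivity)]; ring
  simp only [F, ub, ua, Real.arcsin_one, Real.arcsin_neg]
  ring

lemma kkkk_int (a b : ℝ) : Integrable (fun ξ => kk (b - ξ) * kk (ξ - a)) ∧
    ∫ ξ, kk (b - ξ) * kk (ξ - a) ≤ (|b - a| + 1) * π := by
  rcases lt_or_ge a b with hab | hab
  swap
  · have : (fun ξ => kk (b - ξ) * kk (ξ - a)) = fun _ => 0 := by
      ext ξ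
      rcases le_total ξ a with h | h
      · rw [kk_of_nonpos (u := ξ - a) (by linarith)]; simp
      · rw [kk_of_nonpos (u := b - ξ) (by linarith)]; simp
    rw [this]
    simp
    positivity
  obtain ⟨h1, h2⟩ := hh_out hab (lt_add_one b)
  have hle : ∀ ξ, kk (b - ξ) * kk (ξ - a) ≤ (b - a + 1) * hh a b (b + 1) ξ := by
    intro ξ
    by_cases h : ξ ∈ Set.Ioo a b
    · have h0 := mul_nonneg (kk_nonneg (b - ξ)) (kk_nonneg (ξ - a))
      have h3 : 0 < b + 1 - ξ := by linarith [h.2]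
      unfold hh
      rw [mul_div_assoc', le_div_iff₀ h3]
      nlinarith [h.1]
    · have h3 := hh_zero (x := b + 1) h
      have h4 : kk (b - ξ) * kk (ξ - a) = 0 := by
        rcases le_or_gt ξ a with h5 | h5
        · rw [kk_of_nonpos (u := ξ - a) (by linarith)]; simp
        · have : b ≤ ξ := by by_contra h6; exact h ⟨h5, not_le.1 h6⟩
          rw [kk_of_nonpos (u := b - ξ) (by linarith)]; simp
      rw [h3, h4]; simp
  have hi : Integrable (fun ξ => kk (b - ξ) * kk (ξ - a)) := by
    refine (h1.const_mul (b - a + 1)).mono' ?_ (ae_of_all _ fun ξ => ?_)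
    · exact ((kk_measurable.comp (by fun_prop)).mul (kk_measurable.comp (by fun_prop))).aestronglyMeasurable
    · rw [Real.norm_of_nonneg (mul_nonneg (kk_nonneg _) (kk_nonneg _))]
      exact hle ξ
  refine ⟨hi, ?_⟩
  refine (integral_mono hi (h1.const_mul _) hle).trans ?_
  rw [MeasureTheory.integral_const_mul, h2, abs_of_pos (by linarith)]
  have e1 : kk (b + 1 - b) = 1 := by simp [kk]
  have e2 : kk (b + 1 - a) ≤ 1 := by
    unfold kk
    apply inv_le_one_of_one_le₀
    rw [Real.one_le_sqrt]; linarith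
  rw [e1, mul_one]
  have : π * kk (b + 1 - a) ≤ π := by nlinarith [Real.pi_pos]
  exact mul_le_mul_of_nonneg_left this (by linarith)

noncomputable def Keps (a b x ε : ℝ) : ℝ :=
  ∫ ξ in {ξ : ℝ | ξ ∈ Set.Ioo (-1:ℝ) 1 ∧ ε < |ξ - x|}, hh a b x ξ

lemma measSe (x ε : ℝ) : MeasurableSet {ξ : ℝ | ξ ∈ Set.Ioo (-1:ℝ) 1 ∧ ε < |ξ - x|} := by
  apply MeasurableSet.inter measurableSet_Ioo
  exact measurableSet_lt measurable_const ((measurable_id.sub_const x).abs)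

lemma Keps_nonlt {a b : ℝ} (x ε : ℝ) (h : b ≤ a) : Keps a b x ε = 0 := by
  unfold Keps
  have : ∀ ξ, hh a b x ξ = 0 := fun ξ => hh_zero (by simp [Set.Ioo_eq_empty (not_lt.2 h)])
  simp [this]

lemma Keps_reflect (a b x ε : ℝ) : Keps a b x ε = - Keps (-b) (-a) (-x) ε := by
  unfold Keps
  rw [← MeasureTheory.integral_indicator (measSe x ε), ← MeasureTheory.integral_indicator (measSe (-x) ε), ← MeasureTheory.integral_neg,
    ← integral_neg_eq_self]
  congr 1
  ext ξ
  by_cases h : ξ ∈ {ξ : ℝ | ξ ∈ Set.Ioo (-1:ℝ) 1 ∧ ε < |ξ - -x|}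
  · have h' : -ξ ∈ {ξ : ℝ | ξ ∈ Set.Ioo (-1:ℝ) 1 ∧ ε < |ξ - x|} := by
      refine ⟨⟨by linarith [h.1.2], by linarith [h.1.1]⟩, ?_⟩
      have := h.2
      rwa [← abs_neg, show -(-ξ - x) = ξ - -x by ring]
    rw [Set.indicator_of_mem h, Set.indicator_of_mem h']
    unfold hh
    rw [show x - -ξ = -(-x - ξ) by ring, div_neg, show b - -ξ = ξ - -b by ring,
      show -ξ - a = -a - ξ by ring, mul_comm]
  · have h' : -ξ ∉ {ξ : ℝ | ξ ∈ Set.Ioo (-1:ℝ) 1 ∧ ε < |ξ - x|} := by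
      intro h1
      apply h
      refine ⟨⟨by linarith [h1.1.2], by linarith [h1.1.1]⟩, ?_⟩
      have := h1.2
      rwa [← abs_neg, show -(ξ - -x) = -ξ - x by ring]
    rw [Set.indicator_of_notMem h, Set.indicator_of_notMem h', neg_zero]

noncomputable def Klim (a b x : ℝ) : ℝ := π * (kk (x - a) * kk (x - b) - kk (a - x) * kk (b - x))

lemma Keps_above {a b x : ℝ} (ha : -1 ≤ a) (hb : b ≤ 1) (hab : a < b) (hbx : b < x) :
    (∀ ε, 0 < ε → |Keps a b x ε| ≤ 4 * (kk |x - a| * kk |x - b|)) ∧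
    Tendsto (Keps a b x) (𝓝[>] 0) (𝓝 (Klim a b x)) := by
  obtain ⟨h1, h2⟩ := hh_out hab hbx
  have hxa : 0 < x - a := by linarith
  have hxb : 0 < x - b := by linarith
  constructor
  · intro ε _
    unfold Keps
    rw [abs_of_nonneg (integral_nonneg (hh_nonneg hbx)), abs_of_pos hxa, abs_of_pos hxb]
    refine (setIntegral_le_integral h1 (ae_of_all _ (hh_nonneg hbx))).trans ?_
    rw [h2]
    exact mul_le_mul_of_nonneg_right Real.pi_lt_four.le (mul_nonneg (kk_nonneg _) (kk_nonneg _))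
  · have hlim : Klim a b x = ∫ ξ, hh a b x ξ := by
      rw [h2, Klim, kk_of_nonpos (u := a - x) (by linarith)]; simp
    rw [hlim]
    apply tendsto_const_nhds.congr'
    filter_upwards [Ioo_mem_nhdsGT hxb] with ε hε
    unfold Keps
    symm
    apply setIntegral_eq_integral_of_forall_compl_eq_zero
    intro ξ hξ
    apply hh_zero
    intro h
    apply hξ
    refine ⟨⟨by linarith [h.1], by linarith [h.2]⟩, ?_⟩
    rw [abs_sub_comm]
    refine lt_of_lt_of_le ?_ (le_abs_self _)
    linarith [hε.2, h.2]

noncomputable def DD (a b x ξ : ℝ) : ℝ := √((b - ξ) * (x - a)) + √((ξ - a) * (b - x))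
noncomputable def GG (a b x ξ : ℝ) : ℝ := Real.log (ξ - x) + Real.log (b - a) - 2 * Real.log (DD a b x ξ)

lemma DD_sq {a b x ξ : ℝ} (h1 : a < x) (h2 : x < b) (h3 : a ≤ ξ) (h4 : ξ ≤ b) :
    (b - ξ) * (x - a) + (ξ - a) * (b - x) ≤ DD a b x ξ ^ 2 ∧
    DD a b x ξ ^ 2 ≤ 2 * ((b - ξ) * (x - a) + (ξ - a) * (b - x)) := by
  have e1 : 0 ≤ (b - ξ) * (x - a) := mul_nonneg (by linarith) (by linarith)
  have e2 : 0 ≤ (ξ - a) * (b - x) := mul_nonneg (by linarith) (by linarith)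
  have s1 := Real.sq_sqrt e1
  have s2 := Real.sq_sqrt e2
  have p1 := Real.sqrt_nonneg ((b - ξ) * (x - a))
  have p2 := Real.sqrt_nonneg ((ξ - a) * (b - x))
  unfold DD
  constructor
  · nlinarith
  · nlinarith [sq_nonneg (√((b - ξ) * (x - a)) - √((ξ - a) * (b - x)))]

lemma DD_pos {a b x ξ : ℝ} (h1 : a < x) (h2 : x < b) (h3 : a ≤ ξ) (h4 : ξ ≤ b) : 0 < DD a b x ξ := by
  have hq := (DD_sq h1 h2 h3 h4).1
  have h0 : 0 ≤ DD a b x ξ := by unfold DD; positivity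
  have : 0 < (b - ξ) * (x - a) + (ξ - a) * (b - x) := by
    rcases h3.lt_or_eq with h | h
    · have := mul_pos (sub_pos.2 h) (sub_pos.2 h2)
      have := mul_nonneg (sub_nonneg.2 h4) (sub_pos.2 h1).le
      linarith
    · subst h
      have := mul_pos (show 0 < b - a by linarith) (sub_pos.2 h1)
      linarith
  rcases h0.lt_or_eq with h | h
  · exact h
  · rw [← h] at hq; nlinarith

lemma GG_a {a b x : ℝ} (h1 : a < x) (h2 : x < b) : GG a b x a = 0 := by
  unfold GG DD
  have e : 0 < (b - a) * (x - a) := mul_pos (by linarith) (by linarith)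
  simp only [sub_self, zero_mul, Real.sqrt_zero, add_zero]
  rw [Real.log_sqrt e.le, Real.log_mul (by linarith) (by linarith), ← Real.log_neg_eq_log (a - x), neg_sub]
  ring

lemma GG_b {a b x : ℝ} (h1 : a < x) (h2 : x < b) : GG a b x b = 0 := by
  unfold GG DD
  have e : 0 < (b - a) * (b - x) := mul_pos (by linarith) (by linarith)
  simp only [sub_self, zero_mul, Real.sqrt_zero, zero_add]
  rw [Real.log_sqrt e.le, Real.log_mul (by linarith) (by linarith)]
  ring

lemma hh_inside {a b x c d : ℝ} (h1 : a < x) (h2 : x < b) (hac : a ≤ c) (hcd : c ≤ d) (hdb : d ≤ b)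
    (hx : x ∉ Set.Icc c d) :
    IntegrableOn (hh a b x) (Set.Ioo c d) ∧
    ∫ ξ in Set.Ioo c d, hh a b x ξ = (GG a b x c - GG a b x d) * (kk (x - a) * kk (b - x)) := by
  have hne : ∀ ξ ∈ Set.Icc c d, x - ξ ≠ 0 := by
    intro ξ hξ h
    apply hx
    rwa [show x = ξ by linarith]
  have hint : IntegrableOn (hh a b x) (Set.Icc c d) := by
    have := ((kkkk_int a b).1.integrableOn (s := Set.Icc c d)).mul_continuousOn
      (g' := fun ξ => (x - ξ)⁻¹) (ContinuousOn.inv₀ (by fun_prop) hne) isCompact_Icc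
    exact this
  have hint' : IntervalIntegrable (hh a b x) volume c d :=
    (intervalIntegrable_iff_integrableOn_Icc_of_le hcd).2 hint
  have hxa : 0 < x - a := by linarith
  have hxb : 0 < b - x := by linarith
  let F : ℝ → ℝ := fun ξ => - GG a b x ξ * (kk (x - a) * kk (b - x))
  have hcont : ContinuousOn F (Set.Icc c d) := by
    apply ContinuousOn.mul _ continuousOn_const
    apply ContinuousOn.neg
    unfold GG
    apply ContinuousOn.sub
    · apply ContinuousOn.add _ continuousOn_const
      apply ContinuousOn.log (by fun_prop)
      intro ξ hξ h
      exact hne ξ hξ (by linarith)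
    · apply ContinuousOn.mul continuousOn_const
      apply ContinuousOn.log (by unfold DD; fun_prop)
      intro ξ hξ
      exact (DD_pos h1 h2 (hac.trans hξ.1) (hξ.2.trans hdb)).ne'
  have hder : ∀ ξ ∈ Set.Ioo c d, HasDerivAt F (hh a b x ξ) ξ := by
    intro ξ hξ
    have p1 : 0 < ξ - a := by linarith [hξ.1]
    have p2 : 0 < b - ξ := by linarith [hξ.2]
    have p3 : ξ - x ≠ 0 := by
      intro h
      exact hne ξ ⟨hξ.1.le, hξ.2.le⟩ (by linarith)
    have p4 : x - ξ ≠ 0 := hne ξ ⟨hξ.1.le, hξ.2.le⟩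
    have q1 : 0 < (b - ξ) * (x - a) := by positivity
    have q2 : 0 < (ξ - a) * (b - x) := by positivity
    have hD := DD_pos h1 h2 (by linarith : a ≤ ξ) (by linarith : ξ ≤ b)
    have d1 : HasDerivAt (DD a b x) ((-1 * (x - a)) / (2 * √((b - ξ) * (x - a))) +
        (1 * (b - x)) / (2 * √((ξ - a) * (b - x)))) ξ :=
      ((((hasDerivAt_id ξ).const_sub b).mul_const (x - a)).sqrt q1.ne').add
        ((((hasDerivAt_id ξ).sub_const a).mul_const (b - x)).sqrt q2.ne')
    have d2 := ((((((hasDerivAt_id ξ).sub_const x).log p3).add_const (Real.log (b - a))).sub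
      ((d1.log hD.ne').const_mul 2)).neg).mul_const (kk (x - a) * kk (b - x))
    refine d2.congr_deriv ?_
    simp only [hh, kk, DD, id] at *
    rw [Real.sqrt_mul p2.le, Real.sqrt_mul p1.le] at *
    have sP := Real.sq_sqrt p2.le
    have sQ := Real.sq_sqrt p1.le
    have sA := Real.sq_sqrt hxa.le
    have sB := Real.sq_sqrt hxb.le
    have tP := Real.sqrt_pos.2 p2
    have tQ := Real.sqrt_pos.2 p1
    have tA := Real.sqrt_pos.2 hxa
    have tB := Real.sqrt_pos.2 hxb
    generalize √(b - ξ) = P at *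
    generalize √(ξ - a) = Q at *
    generalize √(x - a) = A at *
    generalize √(b - x) = B at *
    obtain rfl : ξ = a + Q ^ 2 := by linarith
    obtain rfl : b = a + Q ^ 2 + P ^ 2 := by linarith
    obtain rfl : x = a + A ^ 2 := by linarith
    have hBB : B ^ 2 = Q ^ 2 + P ^ 2 - A ^ 2 := by linarith
    rw [show a + Q ^ 2 + P ^ 2 - (a + A ^ 2) = B ^ 2 by rw [hBB]; ring,
      show a + A ^ 2 - a = A ^ 2 by ring] at *
    rw [show a + Q ^ 2 - (a + A ^ 2) = Q ^ 2 - A ^ 2 by ring] at *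
    rw [show a + A ^ 2 - (a + Q ^ 2) = -(Q ^ 2 - A ^ 2) by ring] at *
    field_simp
    linear_combination (Q * A) * hBB
  have e := integral_eq_sub_of_hasDerivAt_of_le hcd hcont hder hint'
  refine ⟨hint.mono_set Set.Ioo_subset_Icc_self, ?_⟩
  rw [← integral_Ioc_eq_integral_Ioo, ← intervalIntegral.integral_of_le hcd, e]
  simp only [F]
  ring

lemma Keps_inside_eq {a b x ε : ℝ} (ha : -1 ≤ a) (hb : b ≤ 1) (h1 : a < x) (h2 : x < b) (hε : 0 < ε) :
    Keps a b x ε = (GG a b x (min b (x + ε)) - GG a b x (max a (x - ε))) * (kk (x - a) * kk (b - x)) := by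
  have hset : {ξ : ℝ | ξ ∈ Set.Ioo (-1:ℝ) 1 ∧ ε < |ξ - x|} ∩ Set.Ioo a b =
      Set.Ioo a (max a (x - ε)) ∪ Set.Ioo (min b (x + ε)) b := by
    ext ξ
    simp only [Set.mem_inter_iff, Set.mem_ofPred_eq, Set.mem_union, Set.mem_Ioo, lt_max_iff, min_lt_iff,
      lt_abs]
    constructor
    · rintro ⟨⟨_, h⟩, h3, h4⟩
      rcases h with h | h
      · right; exact ⟨Or.inr (by linarith), h4⟩
      · left; exact ⟨h3, Or.inr (by linarith)⟩
    · rintro (⟨h3, h4⟩ | ⟨h3, h4⟩)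
      · have : ξ < x - ε := by rcases h4 with h | h <;> linarith
        exact ⟨⟨⟨by linarith, by linarith⟩, Or.inr (by linarith)⟩, h3, by linarith⟩
      · have : x + ε < ξ := by rcases h3 with h | h <;> linarith
        exact ⟨⟨⟨by linarith, by linarith⟩, Or.inl (by linarith)⟩, by linarith, h4⟩
  have e1 : Keps a b x ε = ∫ ξ in {ξ : ℝ | ξ ∈ Set.Ioo (-1:ℝ) 1 ∧ ε < |ξ - x|} ∩ Set.Ioo a b, hh a b x ξ := by
    unfold Keps
    apply setIntegral_eq_of_subset_of_forall_sdiff_eq_zero (measSe x ε) Set.inter_subset_left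
    rintro ξ ⟨hξ, hξ'⟩
    exact hh_zero (fun h => hξ' ⟨hξ, h⟩)
  have hc1 : max a (x - ε) < x := max_lt h1 (by linarith)
  have hc2 : x < min b (x + ε) := lt_min h2 (by linarith)
  obtain ⟨i1, v1⟩ := hh_inside h1 h2 le_rfl (le_max_left a (x - ε)) (hc1.le.trans h2.le)
    (fun h => absurd h.2 (not_le.2 hc1))
  obtain ⟨i2, v2⟩ := hh_inside h1 h2 (h1.le.trans hc2.le) (min_le_left b (x + ε)) le_rfl
    (fun h => absurd h.1 (not_le.2 hc2))
  rw [e1, hset, setIntegral_union _ measurableSet_Ioo i1 i2, v1, v2, GG_a h1 h2, GG_b h1 h2]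
  · ring
  · rw [Set.disjoint_left]
    intro ξ h3 h4
    linarith [h3.2, h4.1]

lemma log_six : Real.log 6 ≤ 4 := by
  have := Real.log_le_sub_one_of_pos (show (0:ℝ) < 6 / 2 by norm_num)
  have h2 := Real.log_two_lt_d9
  have : Real.log 6 = Real.log (6/2) + Real.log 2 := by
    rw [← Real.log_mul (by norm_num) (by norm_num)]; norm_num
  linarith

lemma log_ratio {u v w : ℝ} (hw : 0 < w) (h1 : w ≤ u) (h2 : u ≤ 6 * w) (h3 : w ≤ v) (h4 : v ≤ 6 * w) :
    |Real.log u - Real.log v| ≤ 4 := by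
  have a1 := Real.log_le_log hw h1
  have a2 := Real.log_le_log hw h3
  have a3 := Real.log_le_log (by linarith) h2
  have a4 := Real.log_le_log (by linarith) h4
  rw [Real.log_mul (by norm_num) hw.ne'] at a3 a4
  have := log_six
  rw [abs_le]; constructor <;> linarith

lemma GG_eq {a b x ξ : ℝ} : GG a b x ξ = Real.log |ξ - x| + Real.log (b - a) - Real.log (DD a b x ξ ^ 2) := by
  rw [GG, Real.log_pow, Real.log_abs]; norm_num

lemma Keps_inside {a b x : ℝ} (ha : -1 ≤ a) (hb : b ≤ 1) (h1 : a < x) (h2 : x < b) :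
    (∀ ε, 0 < ε → |Keps a b x ε| ≤ 4 * (kk |x - a| * kk |x - b|)) ∧
    Tendsto (Keps a b x) (𝓝[>] 0) (𝓝 (Klim a b x)) := by
  have hA : 0 < x - a := by linarith
  have hB : 0 < b - x := by linarith
  constructor
  · intro ε hε
    rw [Keps_inside_eq ha hb h1 h2 hε, abs_mul, abs_of_pos hA, abs_sub_comm x b, abs_of_pos hB,
      abs_of_nonneg (mul_nonneg (kk_nonneg _) (kk_nonneg _))]
    refine mul_le_mul_of_nonneg_right ?_ (mul_nonneg (kk_nonneg _) (kk_nonneg _))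
    rcases lt_or_ge ε (x - a) with hεA | hεA <;> rcases lt_or_ge ε (b - x) with hεB | hεB
    · rw [min_eq_right (by linarith), max_eq_right (by linarith), GG_eq, GG_eq]
      obtain ⟨s1, s2⟩ := DD_sq h1 h2 (show a ≤ x + ε by linarith) (show x + ε ≤ b by linarith)
      obtain ⟨s3, s4⟩ := DD_sq h1 h2 (show a ≤ x - ε by linarith) (show x - ε ≤ b by linarith)
      have m1 := mul_le_mul_of_nonneg_right hεA.le hB.le
      have m2 := mul_le_mul_of_nonneg_right hεB.le hA.le
      have m3 := mul_pos hε hA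
      have m4 := mul_pos hε hB
      have := log_ratio (u := DD a b x (x - ε) ^ 2) (v := DD a b x (x + ε) ^ 2) (mul_pos hA hB)
        (by nlinarith) (by nlinarith) (by nlinarith) (by nlinarith)
      rw [show x + ε - x = ε by ring, show x - ε - x = -ε by ring, abs_neg]
      rw [show ∀ p q r s : ℝ, p + q - r - (p + q - s) = s - r by intros; ring]
      exact this
    · rw [min_eq_left (by linarith), max_eq_right (by linarith), GG_b h1 h2, GG_eq]
      obtain ⟨s3, s4⟩ := DD_sq h1 h2 (show a ≤ x - ε by linarith) (show x - ε ≤ b by linarith)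
      have m1 := mul_le_mul_of_nonneg_right hεA.le hB.le
      have m2 := mul_le_mul_of_nonneg_right hεB hA.le
      have m3 := mul_pos hε hA
      have m4 := mul_pos hε hB
      have hba : 0 < b - a := by linarith
      have := log_ratio (u := DD a b x (x - ε) ^ 2) (v := ε * (b - a)) (mul_pos hε hba)
        (by nlinarith) (by nlinarith) le_rfl (by nlinarith)
      rw [show x - ε - x = -ε by ring, abs_neg, abs_of_pos hε]
      rw [Real.log_mul hε.ne' hba.ne'] at this
      rw [abs_le] at this ⊢
      constructor <;> linarith [this.1, this.2]
    · rw [min_eq_right (by linarith), max_eq_left (by linarith), GG_a h1 h2, GG_eq]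
      obtain ⟨s3, s4⟩ := DD_sq h1 h2 (show a ≤ x + ε by linarith) (show x + ε ≤ b by linarith)
      have m1 := mul_le_mul_of_nonneg_right hεA hB.le
      have m2 := mul_le_mul_of_nonneg_right hεB.le hA.le
      have m3 := mul_pos hε hA
      have m4 := mul_pos hε hB
      have hba : 0 < b - a := by linarith
      have := log_ratio (u := ε * (b - a)) (v := DD a b x (x + ε) ^ 2) (mul_pos hε hba)
        le_rfl (by nlinarith) (by nlinarith) (by nlinarith)
      rw [show x + ε - x = ε by ring, abs_of_pos hε]
      rw [Real.log_mul hε.ne' hba.ne'] at this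
      rw [abs_le] at this ⊢
      constructor <;> linarith [this.1, this.2]
    · rw [min_eq_left (by linarith), max_eq_left (by linarith), GG_a h1 h2, GG_b h1 h2]
      norm_num
  · have hlim : Klim a b x = (2 * Real.log (DD a b x (x - 0)) - 2 * Real.log (DD a b x (x + 0))) * (kk (x - a) * kk (b - x)) := by
      rw [Klim, kk_of_nonpos (u := a - x) (by linarith), kk_of_nonpos (u := x - b) (by linarith)]
      simp
    rw [hlim]
    have hD : DD a b x x ≠ 0 := (DD_pos h1 h2 h1.le h2.le).ne'
    have hc : ContinuousAt (fun ε => (2 * Real.log (DD a b x (x - ε)) - 2 * Real.log (DD a b x (x + ε))) * (kk (x - a) * kk (b - x))) 0 := by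
      apply ContinuousAt.mul _ continuousAt_const
      apply ContinuousAt.sub
      · apply ContinuousAt.mul continuousAt_const
        apply ContinuousAt.log
        · unfold DD; fun_prop
        · simpa using hD
      · apply ContinuousAt.mul continuousAt_const
        apply ContinuousAt.log
        · unfold DD; fun_prop
        · simpa using hD
    refine (hc.tendsto.mono_left nhdsWithin_le_nhds).congr' ?_
    filter_upwards [Ioo_mem_nhdsGT hA, Ioo_mem_nhdsGT hB] with ε hεA hεB
    rw [Keps_inside_eq ha hb h1 h2 hεA.1, min_eq_right (by linarith [hεB.2]),
      max_eq_right (by linarith [hεA.2]), GG, GG, show x + ε - x = ε by ring,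
      show x - ε - x = -ε by ring, Real.log_neg_eq_log]
    ring

/-- Uniform bound and pointwise limit of the truncated kernel. -/
lemma Keps_main {a b x : ℝ} (ha : -1 ≤ a) (hb : b ≤ 1) (hab : a < b) (hxa : x ≠ a) (hxb : x ≠ b) :
    (∀ ε, 0 < ε → |Keps a b x ε| ≤ 4 * (kk |x - a| * kk |x - b|)) ∧
    Tendsto (Keps a b x) (𝓝[>] 0) (𝓝 (Klim a b x)) := by
  rcases lt_or_gt_of_ne hxb with h | h
  · rcases lt_or_gt_of_ne hxa with h' | h'
    · obtain ⟨g1, g2⟩ := Keps_above (a := -b) (b := -a) (x := -x) (by linarith) (by linarith) (by linarith)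
        (by linarith)
      constructor
      · intro ε hε
        have := g1 ε hε
        rw [Keps_reflect, abs_neg]
        rwa [show -x - -b = -(x - b) by ring, show -x - -a = -(x - a) by ring, abs_neg, abs_neg,
          mul_comm (kk |x - b|)] at this
      · have e : Klim a b x = - Klim (-b) (-a) (-x) := by
          unfold Klim
          rw [show -x - -b = b - x by ring, show -x - -a = a - x by ring, show -b - -x = x - b by ring,
            show -a - -x = x - a by ring]
          ring
        rw [e]
        refine g2.neg.congr fun ε => ?_
        rw [← Keps_reflect]
    · exact Keps_inside ha hb h' h
  · exact Keps_above ha hb hab h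

noncomputable def AA (x β : ℝ) : ℝ := (Set.Ioo 0 π).indicator (fun β => kk (Real.cos β - x)) β

lemma AA_nonneg (x β : ℝ) : 0 ≤ AA x β := Set.indicator_nonneg (fun _ _ => kk_nonneg _) _

lemma AA_measurable (x : ℝ) : Measurable (AA x) :=
  (kk_measurable.comp (by fun_prop)).indicator measurableSet_Ioo

lemma AA_of_notMem {x β : ℝ} (h : β ∉ Set.Ioo 0 π) : AA x β = 0 := Set.indicator_of_notMem h _
lemma AA_of_mem {x β : ℝ} (h : β ∈ Set.Ioo 0 π) : AA x β = kk (Real.cos β - x) := Set.indicator_of_mem h _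

lemma AA_of_ge {θ β : ℝ} (hθ : 0 < θ) (h : θ ≤ β) : AA (Real.cos θ) β = 0 := by
  by_cases hβ : β ∈ Set.Ioo 0 π
  · rw [AA_of_mem hβ, kk_of_nonpos]
    linarith [Real.cos_le_cos_of_nonneg_of_le_pi hθ.le hβ.2.le h]
  · exact AA_of_notMem hβ

lemma cos_lower {θ : ℝ} (h0 : 0 < θ) (h1 : θ < π) :
    ∃ c, 0 < c ∧ ∀ β ∈ Set.Ioo 0 θ, c * ((θ - β) * (β - 0)) ≤ Real.cos β - Real.cos θ := by
  have hπ := Real.pi_pos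
  set m : ℝ := min (θ / π) (2 * (π - θ) / π) with hm
  have hm0 : 0 < m := by
    apply lt_min
    · positivity
    · have : 0 < π - θ := by linarith
      positivity
  refine ⟨2 * m / π ^ 2, by positivity, ?_⟩
  intro β hβ
  have e : Real.cos β - Real.cos θ = 2 * Real.sin ((β + θ) / 2) * Real.sin ((θ - β) / 2) := by
    rw [Real.cos_sub_cos, show (β - θ) / 2 = -((θ - β) / 2) by ring, Real.sin_neg]; ring
  have s1 : m ≤ Real.sin ((β + θ) / 2) := by
    rcases le_total ((β + θ) / 2) (π / 2) with h | h
    · have := Real.mul_le_sin (x := (β + θ) / 2) (by linarith [hβ.1]) h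
      refine (min_le_left _ _).trans (le_trans ?_ this)
      rw [div_mul_eq_mul_div]
      gcongr
      linarith [hβ.1]
    · have := Real.mul_le_sin (x := π - (β + θ) / 2) (by linarith [hβ.2]) (by linarith)
      rw [Real.sin_pi_sub] at this
      refine (min_le_right _ _).trans (le_trans ?_ this)
      rw [div_mul_eq_mul_div]
      gcongr
      linarith [hβ.2]
  have s2 := Real.mul_le_sin (x := (θ - β) / 2) (by linarith [hβ.2]) (by linarith [hβ.1])
  have t : 0 < θ - β := by linarith [hβ.2]
  have s3 : m * (2 / π * ((θ - β) / 2)) ≤ Real.sin ((β + θ) / 2) * Real.sin ((θ - β) / 2) :=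
    mul_le_mul s1 s2 (by positivity) (hm0.le.trans s1)
  rw [e]
  have s4 : 2 * m / π ^ 2 * ((θ - β) * (β - 0)) ≤ 2 * (m * (2 / π * ((θ - β) / 2))) := by
    have : 2 * (m * (2 / π * ((θ - β) / 2))) = 2 * m / π ^ 2 * ((θ - β) * π) := by field_simp
    rw [this]
    gcongr
    linarith [hβ.2]
  linarith

lemma kk_anti {u v : ℝ} (hu : 0 < u) (h : u ≤ v) : kk v ≤ kk u := by
  unfold kk
  have := Real.sqrt_pos.2 hu
  gcongr

lemma AA_integrable {x : ℝ} (hx : x ∈ Set.Ioo (-1:ℝ) 1) : Integrable (AA x) := by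
  set θ := Real.arccos x with hθ
  have h0 : 0 < θ := Real.arccos_pos.2 hx.2
  have h1 : θ < π := by rw [hθ, Real.arccos_lt_pi]; exact hx.1
  have hc : Real.cos θ = x := Real.cos_arccos hx.1.le hx.2.le
  obtain ⟨c, c0, hcc⟩ := cos_lower h0 h1
  refine ((kkkk_int 0 θ).1.const_mul (kk c)).mono' (AA_measurable x).aestronglyMeasurable
    (ae_of_all _ fun β => ?_)
  rw [Real.norm_of_nonneg (AA_nonneg _ _)]
  have hn := mul_nonneg (kk_nonneg c) (mul_nonneg (kk_nonneg (θ - β)) (kk_nonneg (β - 0)))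
  by_cases hβ : β ∈ Set.Ioo 0 θ
  · rw [AA_of_mem ⟨hβ.1, hβ.2.trans h1⟩, kk_mul (by linarith [hβ.2]), kk_mul c0.le, ← hc]
    apply kk_anti _ (hcc β hβ)
    have : 0 < θ - β := by linarith [hβ.2]
    have : 0 < β - 0 := by linarith [hβ.1]
    positivity
  · have : AA x β = 0 := by
      by_cases h : 0 < β
      · rw [← hc]
        apply AA_of_ge h0
        by_contra h'
        exact hβ ⟨h, not_le.1 h'⟩
      · exact AA_of_notMem (fun h' => h h'.1)
    rw [this]; exact hn

noncomputable def AP (x : ℝ) (p : ℝ × ℝ) : ℂ := ((AA x p.1 * AA x p.2 : ℝ) : ℂ)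

lemma AP_integrable {x : ℝ} (hx : x ∈ Set.Ioo (-1:ℝ) 1) : Integrable (AP x) := by
  exact ((AA_integrable hx).mul_prod (AA_integrable hx)).ofReal

lemma AP_mul_integrable {x : ℝ} (hx : x ∈ Set.Ioo (-1:ℝ) 1) {g : ℝ × ℝ → ℂ} (hg : Continuous g) :
    Integrable (fun p => g p * AP x p) := by
  obtain ⟨M, hM⟩ := ((isCompact_Icc (a := (0:ℝ)) (b := π)).prod
    (isCompact_Icc (a := (0:ℝ)) (b := π))).exists_bound_of_continuousOn hg.continuousOn
  refine ((AP_integrable hx).norm.const_mul M).mono'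
    (hg.aestronglyMeasurable.mul (AP_integrable hx).aestronglyMeasurable) (ae_of_all _ fun p => ?_)
  rw [norm_mul]
  by_cases h1 : p.1 ∈ Set.Ioo 0 π
  · by_cases h2 : p.2 ∈ Set.Ioo 0 π
    · exact mul_le_mul_of_nonneg_right (hM p ⟨Set.Ioo_subset_Icc_self h1, Set.Ioo_subset_Icc_self h2⟩)
        (norm_nonneg _)
    · simp [AP, AA_of_notMem h2]
  · simp [AP, AA_of_notMem h1]

def Tri : Set (ℝ × ℝ) := {p | p.1 < p.2}
lemma Tri_meas : MeasurableSet Tri := measurableSet_lt measurable_fst measurable_snd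

lemma diag_null : (volume : Measure (ℝ × ℝ)) {p | p.1 = p.2} = 0 := by
  rw [Measure.volume_eq_prod, Measure.measure_prod_null (measurableSet_eq_fun measurable_fst measurable_snd)]
  refine ae_of_all _ fun x => ?_
  have : Prod.mk x ⁻¹' {p : ℝ × ℝ | p.1 = p.2} = {x} := by
    ext y; simp [eq_comm]
  change volume (Prod.mk x ⁻¹' {p : ℝ × ℝ | p.1 = p.2}) = 0
  rw [this]; simp

lemma integral_swap' (F : ℝ × ℝ → ℂ) : ∫ p : ℝ × ℝ, F p.swap = ∫ p : ℝ × ℝ, F p := by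
  rw [Measure.volume_eq_prod]
  exact integral_prod_swap F

lemma integral_symm_tri {F : ℝ × ℝ → ℂ} (hF : Integrable F) (hs : ∀ p, F p.swap = F p) :
    ∫ p, F p = 2 * ∫ p in Tri, F p := by
  have e1 := integral_add_compl Tri_meas hF
  have e2 : ∫ p in Triᶜ, F p = ∫ p in Tri, F p := by
    rw [← MeasureTheory.integral_indicator Tri_meas, ← MeasureTheory.integral_indicator Tri_meas.compl,
      ← integral_swap' (Tri.indicator F)]
    apply MeasureTheory.integral_congr_ae
    have : ∀ᵐ p : ℝ × ℝ, p.1 ≠ p.2 := by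
      rw [ae_iff]; simpa using diag_null
    filter_upwards [this] with p hp
    by_cases h : p.1 < p.2
    · rw [Set.indicator_of_notMem (by simpa [Tri] using h), Set.indicator_of_notMem]
      simp [Tri, h.le]
    · have h' : p.2 < p.1 := lt_of_le_of_ne (not_lt.1 h) (Ne.symm hp)
      rw [Set.indicator_of_mem (by simpa [Tri] using h'.le), Set.indicator_of_mem, hs]
      simpa [Tri] using h'
  rw [← e1, e2]; ring

noncomputable def phi (ν : ℂ) (β : ℝ) : ℂ := Complex.cos ((2*ν + 1) * (β:ℂ) / 2)
noncomputable def kap (ν : ℂ) (d : ℝ) : ℂ := Complex.sin ((2*ν + 1) * ((π:ℂ) - (d:ℂ)) / 2)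

lemma phi_cont (ν : ℂ) : Continuous (phi ν) := by unfold phi; fun_prop
lemma kap_cont (ν : ℂ) : Continuous (kap ν) := by unfold kap; fun_prop

noncomputable def CC (ν : ℂ) (x : ℝ) : ℂ := ∫ β, phi ν β * (AA x β : ℂ)
noncomputable def TT (ν : ℂ) (x : ℝ) : ℂ := ∫ p in Tri, (phi ν p.1 * phi ν (π - p.2)) * AP x p
noncomputable def PHI (ν : ℂ) (x : ℝ) : ℂ := ∫ p in Tri, (kap ν (p.2 - p.1) + kap ν (p.1 + p.2)) * AP x p

lemma TT_CC {ν : ℂ} {x : ℝ} (hx : x ∈ Set.Ioo (-1:ℝ) 1) :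
    2 * phi ν π * TT ν x - CC ν x ^ 2 = - kap ν 0 * PHI ν x := by
  have hC : CC ν x ^ 2 = 2 * ∫ p in Tri, (phi ν p.1 * phi ν p.2) * AP x p := by
    rw [← integral_symm_tri (AP_mul_integrable hx (g := fun p => phi ν p.1 * phi ν p.2) (by have := phi_cont ν; fun_prop))]
    · rw [sq, CC, Measure.volume_eq_prod, ← integral_prod_mul]
      congr 1; ext p; simp only [AP]; push_cast; ring
    · intro p; simp [AP]; ring
  have i1 := (AP_mul_integrable hx (g := fun p => phi ν p.1 * phi ν (π - p.2)) (by have := phi_cont ν; fun_prop)).integrableOn (s := Tri)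
  have i2 := (AP_mul_integrable hx (g := fun p => phi ν p.1 * phi ν p.2) (by have := phi_cont ν; fun_prop)).integrableOn (s := Tri)
  rw [hC, TT, PHI, ← MeasureTheory.integral_const_mul, ← MeasureTheory.integral_const_mul,
    ← MeasureTheory.integral_const_mul, ← MeasureTheory.integral_sub (i1.const_mul _) (i2.const_mul _)]
  congr 1
  ext p
  have key : 2 * phi ν π * (phi ν p.1 * phi ν (π - p.2)) - 2 * (phi ν p.1 * phi ν p.2)
    = - kap ν 0 * (kap ν (p.2 - p.1) + kap ν (p.1 + p.2)) := by
    simp only [phi, kap]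
    push_cast
    set m := (2 * ν + 1) / 2
    rw [show (2 * ν + 1) * (π:ℂ) / 2 = m * π by ring, show (2 * ν + 1) * ((p.1:ℝ):ℂ) / 2 = m * p.1 by ring,
      show (2 * ν + 1) * ((p.2:ℝ):ℂ) / 2 = m * p.2 by ring,
      show (2 * ν + 1) * ((π:ℂ) - (p.2:ℂ)) / 2 = m * π - m * p.2 by ring,
      show (2 * ν + 1) * ((π:ℂ) - ((p.2:ℂ) - (p.1:ℂ))) / 2 = m * π - (m * p.2 - m * p.1) by ring,
      show (2 * ν + 1) * ((π:ℂ) - ((p.1:ℂ) + (p.2:ℂ))) / 2 = m * π - (m * p.1 + m * p.2) by ring,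
      show (2 * ν + 1) * ((π:ℂ) - 0) / 2 = m * π by ring]
    generalize m * (π:ℂ) = P
    generalize m * (p.1:ℂ) = a
    generalize m * (p.2:ℂ) = b
    simp only [Complex.cos_sub, Complex.sin_sub, Complex.cos_add, Complex.sin_add]
    have e1 := Complex.sin_sq_add_cos_sq P
    linear_combination (2 * Complex.cos a * Complex.cos b) * e1
  linear_combination (AP x p) * key

lemma shear_map : Measure.map (fun p : ℝ × ℝ => (p.1 - p.2, p.1 + p.2)) (volume : Measure (ℝ × ℝ)) =
    ENNReal.ofReal (1/2) • volume := by
  let L : (ℝ × ℝ) →ₗ[ℝ] (ℝ × ℝ) := Matrix.toLin (Module.Basis.finTwoProd ℝ) (Module.Basis.finTwoProd ℝ) !![1, -1; 1, 1]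
  have hdet : LinearMap.det L = 2 := by
    simp only [L, LinearMap.det_toLin, Matrix.det_fin_two_of]; norm_num
  have hL : (fun p : ℝ × ℝ => (p.1 - p.2, p.1 + p.2)) = L := by
    ext p <;> simp [L, Matrix.toLin_finTwoProd_apply, sub_eq_add_neg]
  rw [hL, Measure.map_linearMap_addHaar_eq_smul_addHaar _ (by rw [hdet]; norm_num), hdet]
  norm_num

lemma shear {F : ℝ × ℝ → ℂ} (hF : Integrable F) :
    Integrable (fun p : ℝ × ℝ => F (p.1 - p.2, p.1 + p.2)) ∧
    ∫ p, F p = 2 * ∫ p : ℝ × ℝ, F (p.1 - p.2, p.1 + p.2) := by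
  have hm : AEMeasurable (fun p : ℝ × ℝ => (p.1 - p.2, p.1 + p.2)) (volume : Measure (ℝ × ℝ)) := by fun_prop
  have hF' : Integrable F (Measure.map (fun p : ℝ × ℝ => (p.1 - p.2, p.1 + p.2)) (volume : Measure (ℝ × ℝ))) := by
    rw [shear_map]; exact hF.smul_measure ENNReal.ofReal_ne_top
  constructor
  · exact (integrable_map_measure hF'.aestronglyMeasurable hm).1 hF'
  · have := integral_map hm hF'.aestronglyMeasurable
    rw [← this, shear_map, MeasureTheory.integral_smul_measure]
    rw [ENNReal.toReal_ofReal (by norm_num)]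
    simp

noncomputable def HH (x : ℝ) (p : ℝ × ℝ) : ℂ := if 0 < p.2 then AP x (p.1 - p.2, p.1 + p.2) else 0

noncomputable def JJ (θ δ : ℝ) : ℝ :=
  if 0 < δ ∧ δ < θ then EE (Real.cos (θ - δ)) (Real.cos (θ + δ)) else 0

lemma inner_HH {θ δ : ℝ} (h0 : 0 < θ) (h1 : θ < π) :
    ∫ τ, (HH (Real.cos θ) (τ, δ) + HH (Real.cos θ) (δ, τ)) = (JJ θ δ : ℂ) := by
  have e : (fun τ => HH (Real.cos θ) (τ, δ) + HH (Real.cos θ) (δ, τ)) =ᵐ[volume]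
      (fun τ => (((if 0 < δ then (Set.Ioo 0 (θ - δ)).indicator
        (fun τ => kk (Real.cos (τ - δ) - Real.cos θ) * kk (Real.cos (τ + δ) - Real.cos θ)) τ else 0 : ℝ)) : ℂ)) := by
    have hae : ∀ᵐ τ : ℝ, τ ≠ δ := by
      rw [ae_iff]; simp
    filter_upwards [hae] with τ hτ
    by_cases hδ : 0 < δ
    · rw [if_pos hδ]
      by_cases hτ0 : 0 < τ
      · simp only [HH, AP, if_pos hδ, if_pos hτ0]
        by_cases hs : τ + δ < θ
        · rw [Set.indicator_of_mem (by constructor <;> linarith : τ ∈ Set.Ioo 0 (θ - δ))]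
          rcases lt_or_gt_of_ne hτ with h | h
          · rw [AA_of_notMem (β := τ - δ) (fun h' => by linarith [h'.1]),
              AA_of_mem (β := δ - τ) (by constructor <;> linarith),
              AA_of_mem (β := δ + τ) (by constructor <;> linarith), ← Real.cos_neg (τ - δ), neg_sub,
              add_comm τ δ]
            simp
          · rw [AA_of_notMem (β := δ - τ) (fun h' => by linarith [h'.1]),
              AA_of_mem (β := τ - δ) (by constructor <;> linarith),
              AA_of_mem (β := τ + δ) (by constructor <;> linarith)]
            simp
        · rw [Set.indicator_of_notMem (fun h => hs (by linarith [h.2])),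
            AA_of_ge h0 (by linarith : θ ≤ τ + δ), AA_of_ge h0 (by linarith : θ ≤ δ + τ)]
          simp
      · rw [Set.indicator_of_notMem (fun h => hτ0 h.1)]
        simp only [HH, AP, if_pos hδ, if_neg hτ0]
        rw [AA_of_notMem (β := τ - δ) (fun h' => by linarith [h'.1])]
        simp
    · rw [if_neg hδ]
      simp only [HH, AP, if_neg hδ]
      by_cases hτ0 : 0 < τ
      · rw [if_pos hτ0, AA_of_notMem (β := δ - τ) (fun h' => by linarith [h'.1])]
        simp
      · rw [if_neg hτ0]; simp
  rw [MeasureTheory.integral_congr_ae e, integral_complex_ofReal]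
  congr 1
  unfold JJ
  by_cases hδ : 0 < δ
  · simp only [if_pos hδ]
    rw [MeasureTheory.integral_indicator measurableSet_Ioo]
    by_cases h : δ < θ
    · rw [if_pos ⟨hδ, h⟩, inner_J hδ h h1]
    · rw [if_neg (fun h' => h h'.2), Set.Ioo_eq_empty (by linarith)]
      simp
  · simp [hδ]

lemma PHI_eq (ν : ℂ) {θ : ℝ} (h0 : 0 < θ) (h1 : θ < π) :
    Integrable (fun δ : ℝ => kap ν (2 * δ) * (JJ θ δ : ℂ)) ∧
    PHI ν (Real.cos θ) = 2 * ∫ δ : ℝ, kap ν (2 * δ) * (JJ θ δ : ℂ) := by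
  set x := Real.cos θ with hxd
  have hx : x ∈ Set.Ioo (-1:ℝ) 1 := by
    constructor
    · rw [← Real.cos_pi]; exact Real.cos_lt_cos_of_nonneg_of_le_pi h0.le le_rfl h1
    · rw [← Real.cos_zero]; exact Real.cos_lt_cos_of_nonneg_of_le_pi le_rfl h1.le h0
  have hk := kap_cont ν
  have i1 := (AP_mul_integrable hx (g := fun p => kap ν (p.2 - p.1)) (by fun_prop)).indicator Tri_meas
  have i2 := (AP_mul_integrable hx (g := fun p => kap ν (p.1 + p.2)) (by fun_prop)).indicator Tri_meas
  obtain ⟨j1, s1⟩ := shear i1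
  obtain ⟨j2, s2⟩ := shear i2
  have f1 : (fun p : ℝ × ℝ => Tri.indicator (fun p => kap ν (p.2 - p.1) * AP x p) (p.1 - p.2, p.1 + p.2))
      = fun p => kap ν (2 * p.2) * HH x p := by
    ext p
    unfold HH
    by_cases h : 0 < p.2
    · rw [Set.indicator_of_mem (by change p.1 - p.2 < p.1 + p.2; linarith), if_pos h]
      simp only []
      rw [show p.1 + p.2 - (p.1 - p.2) = 2 * p.2 by ring]
    · rw [Set.indicator_of_notMem (by change ¬ (p.1 - p.2 < p.1 + p.2); linarith), if_neg h, mul_zero]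
  have f2 : (fun p : ℝ × ℝ => Tri.indicator (fun p => kap ν (p.1 + p.2) * AP x p) (p.1 - p.2, p.1 + p.2))
      = fun p => kap ν (2 * p.1) * HH x p := by
    ext p
    unfold HH
    by_cases h : 0 < p.2
    · rw [Set.indicator_of_mem (by change p.1 - p.2 < p.1 + p.2; linarith), if_pos h]
      simp only []
      rw [show p.1 - p.2 + (p.1 + p.2) = 2 * p.1 by ring]
    · rw [Set.indicator_of_notMem (by change ¬ (p.1 - p.2 < p.1 + p.2); linarith), if_neg h, mul_zero]
  rw [f1] at j1 s1
  rw [f2] at j2 s2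
  have j3 : Integrable (fun p : ℝ × ℝ => kap ν (2 * p.2) * HH x p.swap) := j2.swap
  have s3 : ∫ p : ℝ × ℝ, kap ν (2 * p.1) * HH x p = ∫ p : ℝ × ℝ, kap ν (2 * p.2) * HH x p.swap :=
    (integral_swap' (fun p => kap ν (2 * p.1) * HH x p)).symm
  have j4 := j1.add j3
  have hP : PHI ν x = 2 * ∫ p : ℝ × ℝ, kap ν (2 * p.2) * (HH x p + HH x p.swap) := by
    have : ∀ p : ℝ × ℝ, kap ν (2 * p.2) * (HH x p + HH x p.swap) = 
      kap ν (2 * p.2) * HH x p + kap ν (2 * p.2) * HH x p.swap := fun p => by ring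
    simp only [this]
    rw [MeasureTheory.integral_add j1 j3, mul_add, ← s3, ← s1, ← s2, ← MeasureTheory.integral_add i1 i2, PHI,
      ← MeasureTheory.integral_indicator Tri_meas]
    congr 1
    ext p
    by_cases h : p ∈ Tri
    · simp only [Set.indicator_of_mem h]; ring
    · simp only [Set.indicator_of_notMem h]; ring
  have j5 : Integrable (fun p : ℝ × ℝ => kap ν (2 * p.2) * (HH x p + HH x p.swap)) :=
    j4.congr (ae_of_all _ fun p => by simp only [Pi.add_apply]; ring)
  have hin : ∀ δ : ℝ, ∫ τ : ℝ, kap ν (2 * δ) * (HH x (τ, δ) + HH x (δ, τ)) = kap ν (2 * δ) * (JJ θ δ : ℂ) := by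
    intro δ
    rw [MeasureTheory.integral_const_mul, inner_HH h0 h1]
  rw [Measure.volume_eq_prod] at j5
  constructor
  · have := j5.integral_prod_right
    simp only [Prod.swap_prod_mk] at this
    simpa only [hin] using this
  · rw [hP, Measure.volume_eq_prod, integral_prod_symm _ j5]
    simp only [Prod.swap_prod_mk, hin]

lemma kap_reflect (ν : ℂ) (δ : ℝ) : kap ν (2 * (π - δ)) = - kap ν (2 * δ) := by
  unfold kap
  rw [← Complex.sin_neg]
  congr 1
  push_cast
  ring

lemma PHI_symm_aux (ν : ℂ) {θ : ℝ} (h0 : 0 < θ) (h1 : θ < π) (hle : θ ≤ π - θ) :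
    PHI ν (Real.cos θ) = PHI ν (-Real.cos θ) := by
  obtain ⟨i1, e1⟩ := PHI_eq ν h0 h1
  obtain ⟨i2, e2⟩ := PHI_eq ν (θ := π - θ) (by linarith) (by linarith)
  rw [Real.cos_pi_sub] at e2
  rw [e1, e2]
  have key : ∫ δ : ℝ, (kap ν (2 * δ) * (JJ (π - θ) δ : ℂ) - kap ν (2 * δ) * (JJ θ δ : ℂ)) = 0 := by
    set f : ℝ → ℂ := fun δ => kap ν (2 * δ) * (JJ (π - θ) δ : ℂ) - kap ν (2 * δ) * (JJ θ δ : ℂ) with hf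
    have h2 : ∫ δ, f (π - δ) = ∫ δ, f δ := integral_sub_left_eq_self f volume π
    have h3 : ∫ δ, f (π - δ) = ∫ δ, - f δ := by
      apply MeasureTheory.integral_congr_ae
      have hae1 : ∀ᵐ δ : ℝ, δ ≠ θ := by rw [ae_iff]; simp
      have hae2 : ∀ᵐ δ : ℝ, δ ≠ π - θ := by rw [ae_iff]; simp
      filter_upwards [hae1, hae2] with δ hd1 hd2
      simp only [hf]
      rw [kap_reflect]
      have hJ : JJ (π - θ) (π - δ) - JJ θ (π - δ) = JJ (π - θ) δ - JJ θ δ := by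
        have small : ∀ d, d < θ → JJ (π - θ) d - JJ θ d = 0 := by
          intro d hd
          unfold JJ
          by_cases hd0 : 0 < d
          · rw [if_pos ⟨hd0, by linarith⟩, if_pos ⟨hd0, hd⟩]
            rw [show π - θ - d = π - (θ + d) by ring, show π - θ + d = π - (θ - d) by ring, Real.cos_pi_sub,
              Real.cos_pi_sub, ← EE_symm, sub_self]
            · rw [← Real.cos_pi]
              exact Real.cos_lt_cos_of_nonneg_of_le_pi (by linarith) le_rfl (by linarith)
            · exact Real.cos_lt_cos_of_nonneg_of_le_pi (by linarith) (by linarith) (by linarith)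
            · rw [← Real.cos_zero]
              exact Real.cos_lt_cos_of_nonneg_of_le_pi le_rfl (by linarith) (by linarith)
          · rw [if_neg (fun h => hd0 h.1), if_neg (fun h => hd0 h.1), sub_self]
        have large : ∀ d, π - θ < d → JJ (π - θ) d - JJ θ d = 0 := by
          intro d hd
          unfold JJ
          rw [if_neg (fun h => by linarith [h.2]), if_neg (fun h => by linarith [h.2]), sub_self]
        rcases lt_or_gt_of_ne hd1 with h | h
        · rw [small δ h, large (π - δ) (by linarith)]
        rcases lt_or_gt_of_ne hd2 with h' | h'
        · unfold JJ
          rw [if_pos ⟨by linarith, by linarith⟩, if_neg (fun h => by linarith [h.2]),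
            if_pos ⟨by linarith, by linarith⟩, if_neg (fun h => by linarith [h.2])]
          rw [sub_zero, sub_zero, show π - θ - (π - δ) = δ - θ by ring,
            show π - θ - δ = π - (θ + δ) by ring, Real.cos_pi_sub,
            show π - θ + δ = π - (θ - δ) by ring, Real.cos_pi_sub,
            show π - θ + (π - δ) = 2 * π - (θ + δ) by ring, Real.cos_two_pi_sub, ← EE_symm,
            ← Real.cos_neg (δ - θ), neg_sub]
          · rw [← Real.cos_pi]
            exact Real.cos_lt_cos_of_nonneg_of_le_pi (by linarith) le_rfl (by linarith)
          · rw [← Real.cos_neg (θ - δ), neg_sub]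
            exact Real.cos_lt_cos_of_nonneg_of_le_pi (by linarith) (by linarith) (by linarith)
          · rw [← Real.cos_neg (θ - δ), neg_sub, ← Real.cos_zero]
            exact Real.cos_lt_cos_of_nonneg_of_le_pi le_rfl (by linarith) (by linarith)
        · rw [large δ h', small (π - δ) (by linarith)]
      have hJ' : ((JJ (π - θ) (π - δ) : ℂ)) - (JJ θ (π - δ) : ℂ) = (JJ (π - θ) δ : ℂ) - (JJ θ δ : ℂ) := by
        exact_mod_cast hJ
      linear_combination (- kap ν (2 * δ)) * hJ'
    rw [MeasureTheory.integral_neg] at h3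
    rw [h3] at h2
    have : (2:ℂ) * ∫ δ, f δ = 0 := by linear_combination -h2
    simpa using this
  rw [MeasureTheory.integral_sub i2 i1] at key
  rw [sub_eq_zero.1 key]

lemma PHI_symm (ν : ℂ) {x : ℝ} (hx : x ∈ Set.Ioo (-1:ℝ) 1) : PHI ν x = PHI ν (-x) := by
  have h0 : 0 < Real.arccos x := Real.arccos_pos.2 hx.2
  have h1 : Real.arccos x < π := by rw [Real.arccos_lt_pi]; exact hx.1
  have hc : Real.cos (Real.arccos x) = x := Real.cos_arccos hx.1.le hx.2.le
  rcases le_total (Real.arccos x) (π - Real.arccos x) with h | h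
  · have := PHI_symm_aux ν h0 h1 h
    rwa [hc] at this
  · have := PHI_symm_aux ν (θ := π - Real.arccos x) (by linarith) (by linarith) (by linarith)
    rw [Real.cos_pi_sub, hc, neg_neg] at this
    exact this.symm

lemma legendreP_eq (ν : ℂ) {ξ : ℝ} (hξ : ξ ∈ Set.Ioo (-1:ℝ) 1) :
    legendreP ν ξ = ((Real.sqrt 2 / π : ℝ) : ℂ) * CC ν ξ := by
  have h0 : 0 < Real.arccos ξ := Real.arccos_pos.2 hξ.2
  have h1 : Real.arccos ξ < π := by rw [Real.arccos_lt_pi]; exact hξ.1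
  have hc : Real.cos (Real.arccos ξ) = ξ := Real.cos_arccos hξ.1.le hξ.2.le
  have e1 : CC ν ξ = ∫ β in Set.Ioc 0 (Real.arccos ξ), phi ν β * (AA ξ β : ℂ) := by
    unfold CC
    rw [setIntegral_eq_integral_of_forall_compl_eq_zero]
    intro β hβ
    have : AA ξ β = 0 := by
      by_cases hb : 0 < β
      · have hge : Real.arccos ξ ≤ β := by
          by_contra h
          exact hβ ⟨hb, by linarith⟩
        have := AA_of_ge h0 hge
        rwa [hc] at this
      · exact AA_of_notMem (fun h => hb h.1)
    simp [this]
  unfold legendreP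
  rw [if_neg hξ.2.ne, e1, integral_of_le h0.le, ← MeasureTheory.integral_const_mul,
    ← MeasureTheory.integral_const_mul]
  refine setIntegral_congr_fun measurableSet_Ioc (fun β hβ => ?_)
  rw [AA_of_mem ⟨hβ.1, lt_of_le_of_lt hβ.2 h1⟩, phi, kk, Real.sqrt_mul (by norm_num)]
  have h2 : ((Real.sqrt 2 : ℝ) : ℂ) ≠ 0 := by
    exact_mod_cast (Real.sqrt_pos.2 (by norm_num : (0:ℝ) < 2)).ne'
  have h22 : ((Real.sqrt 2 : ℝ) : ℂ) * ((Real.sqrt 2 : ℝ) : ℂ) = 2 := by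
    exact_mod_cast Real.mul_self_sqrt (by norm_num : (0:ℝ) ≤ 2)
  push_cast
  rw [← h22, div_eq_mul_inv (Complex.cos _), mul_inv]
  field_simp

noncomputable def rho : Measure ℝ := volume.restrict (Set.Ioo 0 π)

instance : IsFiniteMeasure rho := by unfold rho; infer_instance

lemma CC_rho (ν : ℂ) (ξ : ℝ) : CC ν ξ = ∫ β, phi ν β * (kk (Real.cos β - ξ) : ℂ) ∂rho := by
  unfold CC rho
  rw [← MeasureTheory.integral_indicator measurableSet_Ioo]
  congr 1; ext β
  by_cases h : β ∈ Set.Ioo 0 π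
  · rw [Set.indicator_of_mem h, AA_of_mem h]
  · rw [Set.indicator_of_notMem h, AA_of_notMem h]; simp

lemma mem_refl {γ : ℝ} : π - γ ∈ Set.Ioo 0 π ↔ γ ∈ Set.Ioo 0 π := by
  constructor <;> rintro ⟨h1, h2⟩ <;> constructor <;> linarith

lemma AA_refl {ξ γ : ℝ} (h : γ ∈ Set.Ioo 0 π) : AA (-ξ) (π - γ) = kk (ξ - Real.cos γ) := by
  rw [AA_of_mem (mem_refl.2 h), Real.cos_pi_sub]; congr 1; ring

lemma CC_neg_rho (ν : ℂ) (ξ : ℝ) :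
    CC ν (-ξ) = ∫ γ, phi ν (π - γ) * (kk (ξ - Real.cos γ) : ℂ) ∂rho := by
  have : CC ν (-ξ) = ∫ γ, phi ν (π - γ) * (AA (-ξ) (π - γ) : ℂ) := by
    unfold CC
    rw [integral_sub_left_eq_self (fun β => phi ν β * (AA (-ξ) β : ℂ)) volume π]
  rw [this]
  unfold rho
  rw [← MeasureTheory.integral_indicator measurableSet_Ioo]
  congr 1; ext β
  by_cases h : β ∈ Set.Ioo 0 π
  · rw [Set.indicator_of_mem h, AA_refl h]
  · rw [Set.indicator_of_notMem h, AA_of_notMem (fun h' => h (mem_refl.1 h'))]; simp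

noncomputable def gg (ν : ℂ) (p : ℝ × ℝ) : ℂ := phi ν p.1 * phi ν (π - p.2)

lemma gg_cont (ν : ℂ) : Continuous (gg ν) := by
  have := phi_cont ν
  unfold gg; fun_prop

lemma CC_CC (ν : ℂ) (x ξ : ℝ) : CC ν ξ * CC ν (-ξ) / ((x - ξ : ℝ) : ℂ) =
    ∫ p, gg ν p * (hh (Real.cos p.2) (Real.cos p.1) x ξ : ℂ) ∂(rho.prod rho) := by
  rw [CC_rho, CC_neg_rho, ← integral_prod_mul, div_eq_mul_inv, ← MeasureTheory.integral_mul_const]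
  congr 1; ext p
  simp only [gg, hh]
  push_cast
  ring

lemma rho_ae : ∀ᵐ β ∂rho, β ∈ Set.Ioo 0 π := ae_restrict_mem measurableSet_Ioo

lemma rho2_ae : ∀ᵐ p ∂(rho.prod rho), p.1 ∈ Set.Ioo 0 π ∧ p.2 ∈ Set.Ioo 0 π := by
  have h : rho.prod rho = (volume : Measure (ℝ × ℝ)).restrict (Set.Ioo 0 π ×ˢ Set.Ioo 0 π) := by
    unfold rho; rw [Measure.prod_restrict]; rfl
  rw [h]
  exact ae_restrict_mem (measurableSet_Ioo.prod measurableSet_Ioo)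

lemma gg_bound (ν : ℂ) : ∃ M : ℝ, 0 ≤ M ∧ ∀ᵐ p ∂(rho.prod rho), ‖gg ν p‖ ≤ M := by
  obtain ⟨M, hM⟩ := ((isCompact_Icc (a := (0:ℝ)) (b := π)).prod
    (isCompact_Icc (a := (0:ℝ)) (b := π))).exists_bound_of_continuousOn (gg_cont ν).continuousOn
  refine ⟨M, le_trans (norm_nonneg _) (hM (0,0) (by simp [Real.pi_pos.le])), ?_⟩
  filter_upwards [rho2_ae] with p hp
  exact hM p ⟨⟨hp.1.1.le, hp.1.2.le⟩, ⟨hp.2.1.le, hp.2.2.le⟩⟩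

lemma FF_meas (ν : ℂ) (x : ℝ) : Measurable (fun q : (ℝ × ℝ) × ℝ =>
    gg ν q.1 * (hh (Real.cos q.1.2) (Real.cos q.1.1) x q.2 : ℂ)) := by
  have h1 := (gg_cont ν).measurable
  have h2 := kk_measurable
  unfold hh
  fun_prop

lemma FF_integrable (ν : ℂ) (x : ℝ) {ε : ℝ} (hε : 0 < ε) :
    Integrable (fun q : (ℝ × ℝ) × ℝ =>
      gg ν q.1 * (hh (Real.cos q.1.2) (Real.cos q.1.1) x q.2 : ℂ))
      ((rho.prod rho).prod (volume.restrict {ξ : ℝ | ξ ∈ Set.Ioo (-1:ℝ) 1 ∧ ε < |ξ - x|})) := by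
  obtain ⟨M, hM0, hM⟩ := gg_bound ν
  have hb : ∀ (a b : ℝ), ∀ᵐ ξ ∂(volume.restrict {ξ : ℝ | ξ ∈ Set.Ioo (-1:ℝ) 1 ∧ ε < |ξ - x|}),
      |hh a b x ξ| ≤ ε⁻¹ * (kk (b - ξ) * kk (ξ - a)) := by
    intro a b
    filter_upwards [ae_restrict_mem (measSe x ε)] with ξ hξ
    have h2 : ε < |x - ξ| := by rw [abs_sub_comm]; exact hξ.2
    rw [hh, abs_div, abs_of_nonneg (mul_nonneg (kk_nonneg _) (kk_nonneg _)), div_eq_inv_mul]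
    exact mul_le_mul_of_nonneg_right (inv_anti₀ hε h2.le) (mul_nonneg (kk_nonneg _) (kk_nonneg _))
  have hint : ∀ a b : ℝ, Integrable (hh a b x)
      (volume.restrict {ξ : ℝ | ξ ∈ Set.Ioo (-1:ℝ) 1 ∧ ε < |ξ - x|}) := by
    intro a b
    refine (((kkkk_int a b).1.integrableOn).const_mul ε⁻¹).mono' ?_ (hb a b)
    exact (hh_measurable a b x).aestronglyMeasurable
  have hasm := (FF_meas ν x).aestronglyMeasurable (μ := ((rho.prod rho).prod
    (volume.restrict {ξ : ℝ | ξ ∈ Set.Ioo (-1:ℝ) 1 ∧ ε < |ξ - x|})))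
  rw [integrable_prod_iff hasm]
  constructor
  · exact Eventually.of_forall (fun p => ((hint (Real.cos p.2) (Real.cos p.1)).ofReal (𝕜 := ℂ)).const_mul (gg ν p))
  · refine (integrable_const (M * (ε⁻¹ * (3 * π)))).mono' hasm.norm.integral_prod_right' ?_
    filter_upwards [hM] with p hp
    rw [Real.norm_of_nonneg (integral_nonneg (fun _ => norm_nonneg _))]
    simp only [norm_mul, Complex.norm_real]
    rw [MeasureTheory.integral_const_mul]
    refine mul_le_mul hp ?_ (integral_nonneg (fun _ => norm_nonneg _)) hM0
    have hk := kkkk_int (Real.cos p.2) (Real.cos p.1)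
    calc _ ≤ ∫ ξ in {ξ : ℝ | ξ ∈ Set.Ioo (-1:ℝ) 1 ∧ ε < |ξ - x|},
          ε⁻¹ * (kk (Real.cos p.1 - ξ) * kk (ξ - Real.cos p.2)) :=
        integral_mono_ae (hint _ _).norm (hk.1.integrableOn.const_mul ε⁻¹) (hb _ _)
      _ ≤ ε⁻¹ * (3 * π) := by
        rw [MeasureTheory.integral_const_mul]
        refine mul_le_mul_of_nonneg_left ?_ (by positivity)
        refine (setIntegral_le_integral hk.1
          (Eventually.of_forall (fun _ => mul_nonneg (kk_nonneg _) (kk_nonneg _)))).trans ?_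
        refine hk.2.trans (mul_le_mul_of_nonneg_right ?_ Real.pi_pos.le)
        have : |Real.cos p.1 - Real.cos p.2| ≤ 2 := by
          rw [abs_le]; constructor <;>
          linarith [Real.cos_le_one p.1, Real.neg_one_le_cos p.1, Real.cos_le_one p.2, Real.neg_one_le_cos p.2]
        linarith

lemma fubini_eps (ν : ℂ) (x : ℝ) {ε : ℝ} (hε : 0 < ε) :
    ∫ ξ in {ξ : ℝ | ξ ∈ Set.Ioo (-1:ℝ) 1 ∧ ε < |ξ - x|}, CC ν ξ * CC ν (-ξ) / ((x - ξ : ℝ) : ℂ) =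
    ∫ p, gg ν p * (Keps (Real.cos p.2) (Real.cos p.1) x ε : ℂ) ∂(rho.prod rho) := by
  simp_rw [CC_CC]
  rw [← integral_integral_swap (f := fun (p : ℝ × ℝ) (ξ : ℝ) =>
    gg ν p * (hh (Real.cos p.2) (Real.cos p.1) x ξ : ℂ)) (FF_integrable ν x hε)]
  congr 1; ext p
  rw [MeasureTheory.integral_const_mul, integral_complex_ofReal]
  rfl

lemma kabs_integrable {x : ℝ} (hx : x ∈ Set.Ioo (-1:ℝ) 1) :
    Integrable (fun β => kk |x - Real.cos β|) rho := by
  have hx' : -x ∈ Set.Ioo (-1:ℝ) 1 := by constructor <;> linarith [hx.1, hx.2]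
  have h1 : Integrable (fun β => AA x β + AA (-x) (π - β)) :=
    (AA_integrable hx).add ((AA_integrable hx').comp_sub_left π)
  refine (h1.integrableOn (s := Set.Ioo 0 π)).congr ?_
  filter_upwards [ae_restrict_mem measurableSet_Ioo] with β hβ
  rw [AA_of_mem hβ, AA_refl hβ]
  rcases le_total x (Real.cos β) with h | h
  · rw [kk_of_nonpos (by linarith : x - Real.cos β ≤ 0), abs_of_nonpos (by linarith)]; simp
  · rw [kk_of_nonpos (by linarith : Real.cos β - x ≤ 0), abs_of_nonneg (by linarith)]; simp

noncomputable def Lim (ν : ℂ) (x : ℝ) (p : ℝ × ℝ) : ℂ :=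
  if p.1 < p.2 then gg ν p * (Klim (Real.cos p.2) (Real.cos p.1) x : ℂ) else 0

lemma rho_ne (θ : ℝ) : ∀ᵐ β ∂rho, β ≠ θ := by
  unfold rho
  refine ae_restrict_of_ae ?_
  rw [ae_iff]; simp

lemma domconv (ν : ℂ) {x : ℝ} (hx : x ∈ Set.Ioo (-1:ℝ) 1) :
    Tendsto (fun ε => ∫ p, gg ν p * (Keps (Real.cos p.2) (Real.cos p.1) x ε : ℂ) ∂(rho.prod rho))
      (𝓝[>] 0) (𝓝 (∫ p, Lim ν x p ∂(rho.prod rho))) := by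
  obtain ⟨M, hM0, hM⟩ := gg_bound ν
  have hn1 : ∀ᵐ p ∂(rho.prod rho), p.1 ≠ Real.arccos x :=
    Measure.quasiMeasurePreserving_fst.ae (rho_ne _)
  have hn2 : ∀ᵐ p ∂(rho.prod rho), p.2 ≠ Real.arccos x :=
    Measure.quasiMeasurePreserving_snd.ae (rho_ne _)
  have hne : ∀ β ∈ Set.Ioo 0 π, β ≠ Real.arccos x → x ≠ Real.cos β := by
    intro β hβ h h'
    rw [h', Real.arccos_cos hβ.1.le hβ.2.le] at h
    exact h rfl
  refine tendsto_integral_filter_of_dominated_convergence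
    (fun p => M * (4 * (kk |x - Real.cos p.1| * kk |x - Real.cos p.2|))) ?_ ?_ ?_ ?_
  · filter_upwards [self_mem_nhdsWithin] with ε hε
    have := (FF_integrable ν x (Set.mem_Ioi.1 hε)).aestronglyMeasurable.integral_prod_right'
    refine this.congr (Eventually.of_forall (fun p => ?_))
    simp only
    rw [MeasureTheory.integral_const_mul, integral_complex_ofReal]
    rfl
  · filter_upwards [self_mem_nhdsWithin] with ε hε
    filter_upwards [hM, hn1, hn2, rho2_ae] with p hp h1 h2 hQ
    rw [norm_mul, Complex.norm_real]
    refine mul_le_mul hp ?_ (norm_nonneg _) hM0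
    by_cases hlt : p.1 < p.2
    · have := (Keps_main (Real.neg_one_le_cos p.2) (Real.cos_le_one p.1)
        (Real.cos_lt_cos_of_nonneg_of_le_pi hQ.1.1.le hQ.2.2.le hlt)
        (hne _ hQ.2 h2) (hne _ hQ.1 h1)).1 ε hε
      rw [Real.norm_eq_abs]
      linarith
    · rw [Keps_nonlt x ε (Real.cos_le_cos_of_nonneg_of_le_pi hQ.2.1.le hQ.1.2.le (not_lt.1 hlt))]
      have := kk_nonneg |x - Real.cos p.1|
      have := kk_nonneg |x - Real.cos p.2|
      simp only [norm_zero]; positivity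
  · exact (((kabs_integrable hx).mul_prod (kabs_integrable hx)).const_mul 4).const_mul M
  · filter_upwards [hn1, hn2, rho2_ae] with p h1 h2 hQ
    unfold Lim
    by_cases hlt : p.1 < p.2
    · rw [if_pos hlt]
      have := (Keps_main (Real.neg_one_le_cos p.2) (Real.cos_le_one p.1)
        (Real.cos_lt_cos_of_nonneg_of_le_pi hQ.1.1.le hQ.2.2.le hlt)
        (hne _ hQ.2 h2) (hne _ hQ.1 h1)).2
      exact ((Complex.continuous_ofReal.tendsto _).comp this).const_mul _
    · rw [if_neg hlt]
      simp_rw [Keps_nonlt x _ (Real.cos_le_cos_of_nonneg_of_le_pi hQ.2.1.le hQ.1.2.le (not_lt.1 hlt))]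
      simp

lemma TT_refl (ν : ℂ) (x : ℝ) :
    TT ν x = ∫ p in Tri, gg ν p * AP x (π - p.2, π - p.1) := by
  unfold TT
  rw [← MeasureTheory.integral_indicator Tri_meas, ← MeasureTheory.integral_indicator Tri_meas]
  rw [← integral_sub_left_eq_self _ (volume : Measure (ℝ × ℝ)) ((π, π) : ℝ × ℝ), ← integral_swap']
  congr 1; ext p
  by_cases h : p.1 < p.2
  · rw [Set.indicator_of_mem (show (p : ℝ × ℝ) ∈ Tri from h), Set.indicator_of_mem]
    · simp only [gg, Prod.fst_sub, Prod.snd_sub, sub_sub_cancel]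
      congr 1
      simp only [Prod.fst_swap, Prod.snd_swap]
      ring
    · show π - p.2 < π - p.1
      linarith
  · rw [Set.indicator_of_notMem (show (p : ℝ × ℝ) ∉ Tri from h), Set.indicator_of_notMem]
    show ¬ (π - p.2 < π - p.1)
    intro h'; apply h; linarith

lemma Lim_eq (ν : ℂ) {x : ℝ} (hx : x ∈ Set.Ioo (-1:ℝ) 1) :
    ∫ p, Lim ν x p ∂(rho.prod rho) = (π : ℂ) * (TT ν (-x) - TT ν x) := by
  have hx' : -x ∈ Set.Ioo (-1:ℝ) 1 := by constructor <;> linarith [hx.1, hx.2]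
  have hmr : rho.prod rho = (volume : Measure (ℝ × ℝ)).restrict (Set.Ioo 0 π ×ˢ Set.Ioo 0 π) := by
    unfold rho; rw [Measure.prod_restrict]; rfl
  have i2 : Integrable (fun p => gg ν p * AP x p) := AP_mul_integrable hx (gg_cont ν)
  have i1 : Integrable (fun p : ℝ × ℝ => gg ν p * AP (-x) (π - p.2, π - p.1)) := by
    have h1 : Integrable (fun p => gg ν p * AP (-x) p) := AP_mul_integrable hx' (gg_cont ν)
    have h2 := (h1.comp_sub_left ((π, π) : ℝ × ℝ)).swap
    refine h2.congr (Eventually.of_forall (fun p => ?_))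
    simp only [gg, Function.comp, Prod.fst_sub, Prod.snd_sub, Prod.fst_swap, Prod.snd_swap, sub_sub_cancel]
    rw [mul_comm (phi ν (π - p.2))]
    rfl
  have e : TT ν x = ∫ p in Tri, gg ν p * AP x p := rfl
  rw [TT_refl, e, ← MeasureTheory.integral_sub i1.integrableOn i2.integrableOn,
    ← MeasureTheory.integral_const_mul, ← MeasureTheory.integral_indicator Tri_meas, hmr,
    ← MeasureTheory.integral_indicator (measurableSet_Ioo.prod measurableSet_Ioo)]
  congr 1; ext p
  by_cases hQ : p ∈ Set.Ioo 0 π ×ˢ Set.Ioo 0 π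
  · rw [Set.indicator_of_mem hQ]
    unfold Lim
    by_cases h : p.1 < p.2
    · rw [Set.indicator_of_mem (show (p : ℝ × ℝ) ∈ Tri from h), if_pos h]
      simp only [AP]
      rw [AA_refl hQ.1, AA_refl hQ.2, AA_of_mem hQ.1, AA_of_mem hQ.2, Klim]
      push_cast; ring
    · rw [Set.indicator_of_notMem (show (p : ℝ × ℝ) ∉ Tri from h), if_neg h]
  · rw [Set.indicator_of_notMem hQ]
    have h0 : AP x p = 0 := by
      unfold AP
      by_cases h1 : p.1 ∈ Set.Ioo 0 π
      · rw [AA_of_notMem (β := p.2) (fun h2 => hQ ⟨h1, h2⟩)]; simp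
      · rw [AA_of_notMem h1]; simp
    have h0' : AP (-x) (π - p.2, π - p.1) = 0 := by
      unfold AP
      by_cases h1 : p.1 ∈ Set.Ioo 0 π
      · rw [AA_of_notMem (β := π - p.2) (fun h2 => hQ ⟨h1, mem_refl.1 h2⟩)]; simp
      · rw [AA_of_notMem (β := π - p.1) (fun h2 => h1 (mem_refl.1 h2))]; simp
    symm
    apply Set.indicator_apply_eq_zero.2
    intro _
    rw [h0, h0']; simp

/-- Finite Hilbert (Tricomi) transform of `P_ν(ξ) P_ν(-ξ)`. -/
theorem stmt_17 (ν : ℂ) (hν : ∀ m : ℤ, ν ≠ (m : ℂ)) (x : ℝ) (hx : x ∈ Set.Ioo (-1:ℝ) 1) :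
    Tendsto (fun ε : ℝ =>
        ∫ ξ in {ξ : ℝ | ξ ∈ Set.Ioo (-1:ℝ) 1 ∧ ε < |ξ - x|},
          2 * legendreP ν ξ * legendreP ν (-ξ) / ((π * (x - ξ) : ℝ) : ℂ))
      (𝓝[>] 0)
      (𝓝 (((legendreP ν x)^2 - (legendreP ν (-x))^2) / Complex.sin (ν * (π:ℂ)))) := by
  have hx' : -x ∈ Set.Ioo (-1:ℝ) 1 := by constructor <;> linarith [hx.1, hx.2]
  have hpi : (π : ℂ) ≠ 0 := by exact_mod_cast Real.pi_ne_zero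
  have h22 : ((Real.sqrt 2 : ℝ) : ℂ) ^ 2 = 2 := by
    exact_mod_cast Real.sq_sqrt (by norm_num : (0:ℝ) ≤ 2)
  have hs : Complex.sin (ν * (π:ℂ)) ≠ 0 := by
    intro h
    obtain ⟨k, hk⟩ := Complex.sin_eq_zero_iff.1 h
    exact hν k (mul_right_cancel₀ hpi hk)
  have hphi : phi ν π = - Complex.sin (ν * (π:ℂ)) := by
    unfold phi
    rw [show (2*ν+1)*(π:ℂ)/2 = ν * π + π/2 by ring, Complex.cos_add_pi_div_two]
  have hT := TT_CC (ν := ν) hx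
  have hT' := TT_CC (ν := ν) hx'
  rw [← PHI_symm ν hx] at hT'
  have key : 2 * Complex.sin (ν * (π:ℂ)) * (TT ν (-x) - TT ν x) = CC ν x ^ 2 - CC ν (-x) ^ 2 := by
    rw [hphi] at hT hT'
    linear_combination hT - hT'
  have hlim := (domconv ν hx).const_mul (4 / (π : ℂ) ^ 3)
  rw [Lim_eq ν hx] at hlim
  have hval : ((legendreP ν x)^2 - (legendreP ν (-x))^2) / Complex.sin (ν * (π:ℂ)) =
      4 / (π : ℂ) ^ 3 * ((π : ℂ) * (TT ν (-x) - TT ν x)) := by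
    rw [legendreP_eq ν hx, legendreP_eq ν hx', div_eq_iff hs]
    push_cast
    rw [mul_pow, mul_pow, div_pow, h22, ← mul_sub, ← key]
    field_simp
    ring
  rw [hval]
  refine hlim.congr' ?_
  filter_upwards [self_mem_nhdsWithin] with ε hε
  rw [← fubini_eps ν x hε, ← MeasureTheory.integral_const_mul]
  refine setIntegral_congr_fun (measSe x ε) (fun ξ hξ => ?_)
  have hξ1 : ξ ∈ Set.Ioo (-1:ℝ) 1 := hξ.1
  have hξ' : -ξ ∈ Set.Ioo (-1:ℝ) 1 := by constructor <;> linarith [hξ1.1, hξ1.2]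
  have hne : ((x - ξ : ℝ) : ℂ) ≠ 0 := by
    have : (0:ℝ) < |ξ - x| := lt_trans hε hξ.2
    have h3 := abs_pos.1 this
    exact_mod_cast (fun h => h3 (by linarith) : x - ξ ≠ 0)
  rw [legendreP_eq ν hξ1, legendreP_eq ν hξ']
  rw [Complex.ofReal_mul π (x - ξ), Complex.ofReal_div]
  field_simp
  rw [h22]; ring
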